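/- arXiv:1108.3728 — 5 statements merged into one kernel-verified Lean document; each statement's English description precedes it below -/
import Mathlib

section
/- The distribution preserving rate-distortion function is convex: for any source distribution F_X on ℝ^k, any measurable distortion measure e : ℝ^k × ℝ^k → [0,∞), any distortion levels D₁, D₂ ≥ 0, and any 0 ≤ λ ≤ 1, one has R_DP(λ D₁ + (1−λ) D₂) ≤ λ R_DP(D₁) + (1−λ) R_DP(D₂). -/
open MeasureTheory ProbabilityTheory Real
open scoped ENNReal NNReal Classical

/-- Kullback–Leibler divergence of `μ` from `ν` (in nats), `∞` if `μ` is not absolutely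
continuous w.r.t. `ν` or if the log-likelihood ratio is not integrable. -/
noncomputable def klDiv {α : Type*} [MeasurableSpace α] (μ ν : Measure α) : ℝ≥0∞ :=
  if μ ≪ ν ∧ Integrable (llr μ ν) μ then ENNReal.ofReal (∫ x, llr μ ν x ∂μ) else ⊤

/-- Mutual information of a joint distribution: the KL divergence of the joint law from the
product of its two marginal laws. -/
noncomputable def mutualInfo {α β : Type*} [MeasurableSpace α] [MeasurableSpace β]
    (ρ : Measure (α × β)) : ℝ≥0∞ :=
  klDiv ρ ((ρ.map Prod.fst).prod (ρ.map Prod.snd))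

/-- The distribution preserving rate-distortion function: the infimum of the mutual information
over all joint distributions whose two marginals both equal the source distribution `μ` and whose
expected distortion is at most `D`. -/
noncomputable def RDP {V : Type*} [MeasurableSpace V] (μ : Measure V) (e : V × V → ℝ)
    (D : ℝ≥0∞) : ℝ≥0∞ :=
  ⨅ ρ ∈ {ρ : Measure (V × V) | IsProbabilityMeasure ρ ∧ ρ.map Prod.fst = μ ∧
      ρ.map Prod.snd = μ ∧ ∫⁻ p, ENNReal.ofReal (e p) ∂ρ ≤ D}, mutualInfo ρ


lemma klDiv_eq_info {α : Type*} [MeasurableSpace α] (μ ν : Measure α)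
    [IsProbabilityMeasure μ] [IsProbabilityMeasure ν] :
    klDiv μ ν = InformationTheory.klDiv μ ν := by
  rw [klDiv, InformationTheory.klDiv_def]
  simp

lemma info_klDiv_convex {α : Type*} [MeasurableSpace α] (ρ₁ ρ₂ ν : Measure α)
    [IsProbabilityMeasure ρ₁] [IsProbabilityMeasure ρ₂] [IsProbabilityMeasure ν]
    (a b : ℝ≥0) (ha : a ≠ 0) (hb : b ≠ 0) (hab : a + b = 1) :
    InformationTheory.klDiv (a • ρ₁ + b • ρ₂) ν ≤
      a * InformationTheory.klDiv ρ₁ ν + b * InformationTheory.klDiv ρ₂ ν := by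
  by_cases h1 : ρ₁ ≪ ν
  swap
  · rw [InformationTheory.klDiv_of_not_ac h1, ENNReal.mul_top (by simpa using ha)]
    simp
  by_cases h2 : ρ₂ ≪ ν
  swap
  · rw [InformationTheory.klDiv_of_not_ac h2, ENNReal.mul_top (by simpa using hb)]
    simp
  have h1' : a • ρ₁ ≪ ν := h1.smul_left a
  have h2' : b • ρ₂ ≪ ν := h2.smul_left b
  have h12 : a • ρ₁ + b • ρ₂ ≪ ν := Measure.AbsolutelyContinuous.add_left h1' h2'
  rw [InformationTheory.klDiv_eq_lintegral_klFun_of_ac h12,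
    InformationTheory.klDiv_eq_lintegral_klFun_of_ac h1,
    InformationTheory.klDiv_eq_lintegral_klFun_of_ac h2,
    ← lintegral_const_mul _ (by fun_prop), ← lintegral_const_mul _ (by fun_prop),
    ← lintegral_add_left (by fun_prop)]
  refine lintegral_mono_ae ?_
  filter_upwards [Measure.rnDeriv_add' (a • ρ₁) (b • ρ₂) ν, Measure.rnDeriv_smul_left' ρ₁ ν a,
    Measure.rnDeriv_smul_left' ρ₂ ν b, Measure.rnDeriv_ne_top ρ₁ ν, Measure.rnDeriv_ne_top ρ₂ ν]
    with x hx hx1 hx2 ht1 ht2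
  rw [hx, Pi.add_apply, hx1, hx2, Pi.smul_apply, Pi.smul_apply]
  have hab' : (a : ℝ) + b = 1 := by exact_mod_cast hab
  have key := InformationTheory.convexOn_klFun.2
    (x := (ρ₁.rnDeriv ν x).toReal) (y := (ρ₂.rnDeriv ν x).toReal)
    ENNReal.toReal_nonneg ENNReal.toReal_nonneg a.2 b.2 hab'
  have e1 : (a • ρ₁.rnDeriv ν x + b • ρ₂.rnDeriv ν x).toReal
      = (a : ℝ) • (ρ₁.rnDeriv ν x).toReal + (b : ℝ) • (ρ₂.rnDeriv ν x).toReal := by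
    simp only [ENNReal.smul_def, smul_eq_mul]
    rw [ENNReal.toReal_add (ENNReal.mul_ne_top (by simp) ht1) (ENNReal.mul_ne_top (by simp) ht2)]
    simp
  rw [e1]
  refine (ENNReal.ofReal_le_ofReal key).trans ?_
  refine ENNReal.ofReal_add_le.trans ?_
  simp only [smul_eq_mul]
  rw [ENNReal.ofReal_mul a.2, ENNReal.ofReal_mul b.2]
  simp

lemma RDP_convex_aux {V : Type*} [MeasurableSpace V] (μ : Measure V) [IsProbabilityMeasure μ]
    (e : V × V → ℝ) (D₁ D₂ : ℝ≥0∞) (a b : ℝ≥0) (ha : a ≠ 0) (hb : b ≠ 0) (hab : a + b = 1) :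
    RDP μ e (a * D₁ + b * D₂) ≤ a * RDP μ e D₁ + b * RDP μ e D₂ := by
  have step : ∀ ρ₁ ∈ {ρ : Measure (V × V) | IsProbabilityMeasure ρ ∧ ρ.map Prod.fst = μ ∧
      ρ.map Prod.snd = μ ∧ ∫⁻ p, ENNReal.ofReal (e p) ∂ρ ≤ D₁},
      ∀ ρ₂ ∈ {ρ : Measure (V × V) | IsProbabilityMeasure ρ ∧ ρ.map Prod.fst = μ ∧
      ρ.map Prod.snd = μ ∧ ∫⁻ p, ENNReal.ofReal (e p) ∂ρ ≤ D₂},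
      RDP μ e (a * D₁ + b * D₂) ≤ a * mutualInfo ρ₁ + b * mutualInfo ρ₂ := by
    rintro ρ₁ ⟨p1, f1, s1, d1⟩ ρ₂ ⟨p2, f2, s2, d2⟩
    have hsm : ∀ m : Measure V, a • m + b • m = m := by
      intro m; rw [← add_smul, hab, one_smul]
    have f12 : (a • ρ₁ + b • ρ₂).map Prod.fst = μ := by
      rw [Measure.map_add _ _ measurable_fst, Measure.map_smul, Measure.map_smul, f1, f2, hsm]
    have s12 : (a • ρ₁ + b • ρ₂).map Prod.snd = μ := by
      rw [Measure.map_add _ _ measurable_snd, Measure.map_smul, Measure.map_smul, s1, s2, hsm]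
    have p12 : IsProbabilityMeasure (a • ρ₁ + b • ρ₂) := by
      constructor
      simp only [Measure.add_apply, Measure.smul_apply, measure_univ, ENNReal.smul_def,
        smul_eq_mul, mul_one]
      exact_mod_cast hab
    refine (iInf₂_le (a • ρ₁ + b • ρ₂) ⟨p12, f12, s12, ?_⟩).trans ?_
    rotate_left
    · rw [lintegral_add_measure, lintegral_smul_measure, lintegral_smul_measure]
      simp only [ENNReal.smul_def, smul_eq_mul]
      gcongr
    · rw [mutualInfo, mutualInfo, mutualInfo, f12, s12, f1, s1, f2, s2,
        klDiv_eq_info, klDiv_eq_info, klDiv_eq_info]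
      exact info_klDiv_convex _ _ _ a b ha hb hab
  generalize RDP μ e (a * D₁ + b * D₂) = R at step ⊢
  have ha' : (a : ℝ≥0∞) ≠ 0 := by simpa using ha
  have hb' : (b : ℝ≥0∞) ≠ 0 := by simpa using hb
  unfold RDP
  rw [iInf_subtype', iInf_subtype', ENNReal.mul_iInf_of_ne ha' (by simp),
    ENNReal.mul_iInf_of_ne hb' (by simp), ENNReal.iInf_add]
  refine le_iInf fun ρ₁ => ?_
  rw [ENNReal.add_iInf]
  exact le_iInf fun ρ₂ => step ρ₁ ρ₁.2 ρ₂ ρ₂.2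

/-- the distribution preserving rate-distortion function is convex. -/
theorem RDP_convex {k : ℕ} (μ : Measure (Fin k → ℝ)) [IsProbabilityMeasure μ]
    (e : (Fin k → ℝ) × (Fin k → ℝ) → ℝ) (he : Measurable e) (he0 : ∀ p, 0 ≤ e p)
    (D₁ D₂ : ℝ) (hD₁ : 0 ≤ D₁) (hD₂ : 0 ≤ D₂) (l : ℝ) (hl0 : 0 ≤ l) (hl1 : l ≤ 1) :
    RDP μ e (ENNReal.ofReal (l * D₁ + (1 - l) * D₂)) ≤
      ENNReal.ofReal l * RDP μ e (ENNReal.ofReal D₁) +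
        ENNReal.ofReal (1 - l) * RDP μ e (ENNReal.ofReal D₂) := by
  rcases hl0.eq_or_lt with rfl | hl0'
  · simp
  rcases hl1.eq_or_lt with rfl | hl1'
  · simp
  have h := RDP_convex_aux μ e (ENNReal.ofReal D₁) (ENNReal.ofReal D₂) l.toNNReal (1 - l).toNNReal
    (by simpa using hl0') (by simpa using hl1')
    (by rw [← Real.toNNReal_add hl0 (by linarith)]; simp)
  rw [ENNReal.ofReal_add (mul_nonneg hl0 hD₁) (mul_nonneg (by linarith) hD₂),
    ENNReal.ofReal_mul hl0, ENNReal.ofReal_mul (by linarith)]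
  exact h
end

section
/- Let X and X̃ be real random variables, jointly distributed, such that each of X and X̃ has the Gaussian distribution N(μ_X, σ_X²), and such that E[(X − X̃)²] = D with 0 < D < 2σ_X². Then the mutual information satisfies I(X; X̃) ≥ log σ_X² − (1/2) log(σ_X² D − D²/4). -/
open MeasureTheory ProbabilityTheory Real
open scoped ENNReal NNReal Classical

/-- Pointwise identity: tilting the Gaussian density gives the conditional Gaussian density. -/
lemma aux_pdf (m : ℝ) (v s : ℝ≥0) (hv : (0 : ℝ) < v) (hs : (0 : ℝ) < s) (r : ℝ)
    (hrs : (s : ℝ) = 1 - r ^ 2) (x y : ℝ) :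
    gaussianPDFReal m v y * rexp (-(1 / 2) * Real.log s +
      (2 * r * ((x - m) * (y - m)) - r ^ 2 * ((x - m) ^ 2 + (y - m) ^ 2)) / (2 * v * s)) =
    gaussianPDFReal (m + r * (x - m)) (v * s) y := by
  unfold gaussianPDFReal
  have h1 : rexp (-(1 / 2) * Real.log s) = (√(s : ℝ))⁻¹ := by
    rw [Real.sqrt_eq_rpow, ← Real.rpow_neg hs.le, Real.rpow_def_of_pos hs]
    congr 1; ring
  have h2 : √(2 * π * ((v * s : ℝ≥0) : ℝ)) = √(2 * π * v) * √(s : ℝ) := by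
    rw [← Real.sqrt_mul (by positivity)]
    congr 1; push_cast; ring
  rw [Real.exp_add, h1, h2, mul_inv]
  have h3 : rexp (-(y - (m + r * (x - m))) ^ 2 / (2 * ((v * s : ℝ≥0) : ℝ))) =
      rexp (-(y - m) ^ 2 / (2 * v)) * rexp ((2 * r * ((x - m) * (y - m))
        - r ^ 2 * ((x - m) ^ 2 + (y - m) ^ 2)) / (2 * v * s)) := by
    rw [← Real.exp_add]
    congr 1
    push_cast
    field_simp
    rw [hrs]
    ring
  rw [h3]
  ring

lemma aux_lintegral (m : ℝ) (v s : ℝ≥0) (hv : (0 : ℝ) < v) (hs : (0 : ℝ) < s) (r : ℝ)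
    (hrs : (s : ℝ) = 1 - r ^ 2) :
    ∫⁻ p : ℝ × ℝ, ENNReal.ofReal (rexp (-(1 / 2) * Real.log s +
      (2 * r * ((p.1 - m) * (p.2 - m)) - r ^ 2 * ((p.1 - m) ^ 2 + (p.2 - m) ^ 2)) / (2 * v * s)))
      ∂((gaussianReal m v).prod (gaussianReal m v)) = 1 := by
  have hv0 : v ≠ 0 := by rintro rfl; simp at hv
  have hs0 : s ≠ 0 := by rintro rfl; simp at hs
  rw [lintegral_prod _ (by fun_prop)]
  have : ∀ x : ℝ, ∫⁻ y : ℝ, ENNReal.ofReal (rexp (-(1 / 2) * Real.log s +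
      (2 * r * ((x - m) * (y - m)) - r ^ 2 * ((x - m) ^ 2 + (y - m) ^ 2)) / (2 * v * s)))
      ∂(gaussianReal m v) = 1 := by
    intro x
    rw [gaussianReal_of_var_ne_zero _ hv0,
      lintegral_withDensity_eq_lintegral_mul _ (measurable_gaussianPDF m v) (by fun_prop),
      ← lintegral_gaussianPDFReal_eq_one (m + r * (x - m)) (mul_ne_zero hv0 hs0)]
    refine lintegral_congr fun y => ?_
    rw [← aux_pdf m v s hv hs r hrs x y, ENNReal.ofReal_mul (gaussianPDFReal_nonneg _ _ _)]
    rfl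
  rw [lintegral_congr this]
  simp

/-- Donsker–Varadhan lower bound for a normalized test function. -/
lemma aux_dv {α : Type*} [MeasurableSpace α] (μ ν : Measure α) [IsProbabilityMeasure μ]
    [IsProbabilityMeasure ν] (f : α → ℝ) (hf : Measurable f) (hfμ : Integrable f μ)
    (h1 : ∫⁻ x, ENNReal.ofReal (rexp (f x)) ∂ν = 1) :
    ENNReal.ofReal (∫ x, f x ∂μ) ≤ klDiv μ ν := by
  unfold klDiv
  split_ifs with h
  swap
  · exact le_top
  obtain ⟨hac, hint⟩ := h
  have hfν : Integrable (fun x => rexp (f x)) ν := by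
    rw [← lintegral_ofReal_ne_top_iff_integrable (by fun_prop)
      (Filter.Eventually.of_forall fun x => (Real.exp_pos _).le), h1]
    simp
  have hI : ∫ x, rexp (f x) ∂ν = 1 := by
    rw [integral_eq_lintegral_of_nonneg_ae
      (Filter.Eventually.of_forall fun x => (Real.exp_pos _).le) (by fun_prop), h1]
    simp
  have := isProbabilityMeasure_tilted hfν
  have hpos := InformationTheory.integral_llr_add_sub_measure_univ_nonneg
    (hac.trans (absolutelyContinuous_tilted hfν))
    (integrable_llr_tilted_right hac hfμ hint hfν)
  rw [integral_llr_tilted_right hac hfμ hfν hint, hI] at hpos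
  simp at hpos
  exact ENNReal.ofReal_le_ofReal hpos

lemma aux_moment {Ω : Type*} [MeasurableSpace Ω] (P : Measure Ω) [IsProbabilityMeasure P]
    (X : Ω → ℝ) (hXm : Measurable X) (m : ℝ) (v : ℝ≥0) (hX : P.map X = gaussianReal m v) :
    MemLp (fun ω => X ω - m) 2 P ∧ ∫ ω, (X ω - m) ^ 2 ∂P = v := by
  constructor
  · have h : MemLp id 2 (P.map X) := hX ▸ memLp_id_gaussianReal' 2 (by simp)
    have h' := (memLp_map_measure_iff (by fun_prop) hXm.aemeasurable).1 h
    exact h'.sub (memLp_const m)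
  · have h := variance_id_gaussianReal (μ := m) (v := v)
    rw [variance_eq_integral (by fun_prop)] at h
    simp only [id, integral_id_gaussianReal] at h
    rw [← hX, integral_map hXm.aemeasurable (by fun_prop)] at h
    exact h

/-- if `X` and `X̃` are jointly distributed real random variables, each with the
Gaussian distribution `N(μ_X, σ_X²)`, and `E[(X − X̃)²] = D` with `0 < D < 2σ_X²`, then
`I(X; X̃) ≥ log σ_X² − (1/2) log(σ_X² D − D²/4)`. -/
theorem gaussian_mutualInfo_lower_bound {Ω : Type*} [MeasurableSpace Ω] (P : Measure Ω)
    [IsProbabilityMeasure P] (X X' : Ω → ℝ) (hXm : Measurable X) (hX'm : Measurable X')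
    (μX : ℝ) (v : ℝ≥0) (hX : P.map X = gaussianReal μX v) (hX' : P.map X' = gaussianReal μX v)
    (D : ℝ) (hD : ∫ ω, (X ω - X' ω) ^ 2 ∂P = D) (hD0 : 0 < D) (hD2 : D < 2 * (v : ℝ)) :
    ENNReal.ofReal (Real.log (v : ℝ) - (1 / 2) * Real.log ((v : ℝ) * D - D ^ 2 / 4)) ≤
      mutualInfo (P.map (fun ω => (X ω, X' ω))) := by
  have hvpos : (0 : ℝ) < v := by linarith
  set r : ℝ := 1 - D / (2 * v) with hr
  have hs : 0 < 1 - r ^ 2 := by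
    have h1 : 0 < D / (2 * v) := by positivity
    have h2 : D / (2 * v) < 1 := by rw [div_lt_one (by positivity)]; exact hD2
    nlinarith
  set s : ℝ≥0 := ⟨1 - r ^ 2, hs.le⟩ with hsdef
  have hrs : (s : ℝ) = 1 - r ^ 2 := rfl
  have hs' : (0 : ℝ) < s := hs
  obtain ⟨hA, hA2⟩ := aux_moment P X hXm μX v hX
  obtain ⟨hB, hB2⟩ := aux_moment P X' hX'm μX v hX'
  have iA := hA.integrable_sq
  have iB := hB.integrable_sq
  have iS : Integrable (fun ω => (X ω - μX) ^ 2 + (X' ω - μX) ^ 2) P := iA.add iB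
  have iAB : Integrable (fun ω => (X ω - μX) * (X' ω - μX)) P := hA.integrable_mul hB
  have hAB : ∫ ω, (X ω - μX) * (X' ω - μX) ∂P = r * v := by
    have h : ∫ ω, (X ω - X' ω) ^ 2 ∂P = (v + v) - 2 * ∫ ω, (X ω - μX) * (X' ω - μX) ∂P := by
      rw [← integral_const_mul]
      conv_rhs => rw [← hA2]
      nth_rewrite 2 [hA2]
      rw [← hB2, ← integral_add iA iB, ← integral_sub iS (iAB.const_mul 2)]
      refine integral_congr_ae (Filter.Eventually.of_forall fun ω => ?_)
      simp only
      ring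
    rw [hD] at h
    rw [hr]
    field_simp
    linarith
  have hpm : Measurable (fun ω => (X ω, X' ω)) := hXm.prodMk hX'm
  have : IsProbabilityMeasure (P.map (fun ω => (X ω, X' ω))) :=
    Measure.isProbabilityMeasure_map hpm.aemeasurable
  unfold mutualInfo
  rw [Measure.map_map measurable_fst hpm, Measure.map_map measurable_snd hpm]
  have e1 : P.map (Prod.fst ∘ fun ω => (X ω, X' ω)) = gaussianReal μX v := hX
  have e2 : P.map (Prod.snd ∘ fun ω => (X ω, X' ω)) = gaussianReal μX v := hX'
  rw [e1, e2]
  let f : ℝ × ℝ → ℝ := fun p => -(1 / 2) * Real.log s +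
      (2 * r * ((p.1 - μX) * (p.2 - μX)) - r ^ 2 * ((p.1 - μX) ^ 2 + (p.2 - μX) ^ 2)) / (2 * v * s)
  have hfm : Measurable f := by fun_prop
  have i2 : Integrable (fun ω => (2 * r * ((X ω - μX) * (X' ω - μX)) -
      r ^ 2 * ((X ω - μX) ^ 2 + (X' ω - μX) ^ 2)) / (2 * v * s)) P :=
    ((iAB.const_mul (2 * r)).sub (iS.const_mul (r ^ 2))).div_const _
  have hfi : Integrable f (P.map (fun ω => (X ω, X' ω))) := by
    rw [integrable_map_measure hfm.aestronglyMeasurable hpm.aemeasurable]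
    exact (integrable_const (-(1 / 2) * Real.log s)).add i2
  have key := aux_dv _ _ f hfm hfi (aux_lintegral μX v s hvpos hs' r hrs)
  refine le_trans (le_of_eq ?_) key
  congr 1
  rw [integral_map hpm.aemeasurable hfm.aestronglyMeasurable]
  simp only [f]
  rw [integral_add (integrable_const _) i2, integral_div,
    integral_sub (iAB.const_mul (2 * r)) (iS.const_mul (r ^ 2)),
    integral_const_mul, integral_const_mul, integral_const_mul, integral_add iA iB, hA2, hB2, hAB]
  have e3 : (v : ℝ) * D - D ^ 2 / 4 = v ^ 2 * s := by
    rw [hrs, hr]; field_simp; ring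
  rw [e3, Real.log_mul (by positivity) hs'.ne', Real.log_pow]
  simp only [integral_const, probReal_univ, smul_eq_mul]
  push_cast
  ring
end

section
/- The distribution preserving rate-distortion function for a Gaussian distribution N(μ_X, σ_X²) on ℝ and the squared-error distortion e(x, x̃) = (x − x̃)² is R_DP(D) = log( σ_X² / (σ_X² D − D²/4)^{1/2} ) for 0 < D < 2σ_X², and R_DP(D) = 0 for D ≥ 2σ_X². -/
open MeasureTheory ProbabilityTheory Real
open scoped ENNReal NNReal Classical

/-- The log-density (up to normalization) of the optimal coupling. -/
noncomputable def tiltF (m v r : ℝ) (p : ℝ × ℝ) : ℝ :=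
  r / (2 * v * (1 - r ^ 2)) * ((1 - r) * ((p.1 - m) ^ 2 + (p.2 - m) ^ 2) - (p.1 - p.2) ^ 2)

lemma measurable_tiltF (m v r : ℝ) : Measurable (tiltF m v r) := by
  unfold tiltF; fun_prop

lemma tiltF_swap (m v r x y : ℝ) : tiltF m v r (x, y) = tiltF m v r (y, x) := by
  simp only [tiltF]; ring

lemma integrable_sq_gauss (c m : ℝ) (w : ℝ≥0) :
    Integrable (fun y => (y - m) ^ 2) (gaussianReal c w) := by
  have h : MemLp (fun y : ℝ => y - m) 2 (gaussianReal c w) :=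
    (memLp_id_gaussianReal 2).sub (memLp_const m)
  exact h.integrable_sq

lemma integral_sq_gauss (c m : ℝ) (w : ℝ≥0) :
    ∫ y, (y - m) ^ 2 ∂(gaussianReal c w) = w + (c - m) ^ 2 := by
  have h : MemLp (fun y : ℝ => y - m) 2 (gaussianReal c w) :=
    (memLp_id_gaussianReal 2).sub (memLp_const m)
  have h1 := variance_eq_sub h
  have h2 : Var[fun y : ℝ => y - m; gaussianReal c w] = w := by
    rw [variance_sub_const (by fun_prop)]
    exact variance_fun_id_gaussianReal
  have h3 : ∫ y, (y - m) ∂(gaussianReal c w) = c - m := by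
    have h4 : Integrable (fun y : ℝ => y) (gaussianReal c w) :=
      (memLp_id_gaussianReal 1).integrable le_rfl
    rw [integral_sub h4 (integrable_const _)]
    simp
  rw [h2, h3] at h1
  simp only [Pi.pow_apply] at h1
  linarith

lemma lintegral_sq_gauss (c m : ℝ) (w : ℝ≥0) :
    ∫⁻ y, ENNReal.ofReal ((y - m) ^ 2) ∂(gaussianReal c w)
      = ENNReal.ofReal (w + (c - m) ^ 2) := by
  rw [← integral_sq_gauss, ofReal_integral_eq_lintegral_ofReal (integrable_sq_gauss _ _ _)
    (ae_of_all _ fun y => sq_nonneg _)]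

/-- The conditional variance. -/
noncomputable def condVarG (v : ℝ≥0) (r : ℝ) : ℝ≥0 := v * (1 - r ^ 2).toNNReal

lemma coe_condVarG (v : ℝ≥0) {r : ℝ} (h0 : 0 ≤ r) (h1 : r < 1) :
    (condVarG v r : ℝ) = v * (1 - r ^ 2) := by
  have : 0 ≤ 1 - r ^ 2 := by nlinarith
  simp [condVarG, Real.coe_toNNReal _ this]

lemma exp_mul_pdf (m : ℝ) (v : ℝ≥0) (hv : 0 < (v : ℝ)) {r : ℝ} (h0 : 0 ≤ r) (h1 : r < 1)
    (x y : ℝ) : gaussianPDFReal m v y * exp (tiltF m v r (x, y))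
      = √(1 - r ^ 2) * gaussianPDFReal (m + r * (x - m)) (condVarG v r) y := by
  have hr : 0 < 1 - r ^ 2 := by nlinarith
  have e1 : √(2 * π * (v * (1 - r ^ 2))) = √(2 * π * v) * √(1 - r ^ 2) := by
    rw [← Real.sqrt_mul (by positivity)]; ring_nf
  have hs : √(1 - r ^ 2) ≠ 0 := (Real.sqrt_pos.2 hr).ne'
  have hs' : √(2 * π * v) ≠ 0 := (Real.sqrt_pos.2 (by positivity)).ne'
  rw [gaussianPDFReal, gaussianPDFReal, coe_condVarG v h0 h1, e1, mul_assoc, ← Real.exp_add]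
  have e2 : -(y - m) ^ 2 / (2 * v) + tiltF m v r (x, y)
      = -(y - (m + r * (x - m))) ^ 2 / (2 * (v * (1 - r ^ 2))) := by
    simp only [tiltF]; field_simp; ring
  rw [e2]; field_simp

lemma withDensity_tiltF (m : ℝ) (v : ℝ≥0) (hv : 0 < (v : ℝ)) {r : ℝ} (h0 : 0 ≤ r) (h1 : r < 1)
    (x : ℝ) : (gaussianReal m v).withDensity (fun y => ENNReal.ofReal (exp (tiltF m v r (x, y))))
      = ENNReal.ofReal √(1 - r ^ 2) • gaussianReal (m + r * (x - m)) (condVarG v r) := by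
  have hr : 0 < 1 - r ^ 2 := by nlinarith
  have hv0 : v ≠ 0 := by rintro rfl; simp at hv
  have hw0 : condVarG v r ≠ 0 := by
    intro h
    have := coe_condVarG v h0 h1
    rw [h] at this
    have h3 : 0 < (v : ℝ) * (1 - r ^ 2) := by positivity
    simp at this; grind
  have hmeas : Measurable (fun y => ENNReal.ofReal (exp (tiltF m v r (x, y)))) := by
    have := measurable_tiltF m v r
    fun_prop
  rw [gaussianReal_of_var_ne_zero _ hv0, gaussianReal_of_var_ne_zero _ hw0,
    ← withDensity_mul _ (measurable_gaussianPDF _ _) hmeas,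
    ← withDensity_smul _ (measurable_gaussianPDF _ _)]
  congr 1
  ext y
  simp only [Pi.mul_apply, Pi.smul_apply, smul_eq_mul, gaussianPDF]
  rw [← ENNReal.ofReal_mul (gaussianPDFReal_nonneg _ _ _), ← ENNReal.ofReal_mul (by positivity),
    exp_mul_pdf m v hv h0 h1]

lemma lintegral_inner (m : ℝ) (v : ℝ≥0) (hv : 0 < (v : ℝ)) {r : ℝ} (h0 : 0 ≤ r) (h1 : r < 1)
    (x : ℝ) (g : ℝ → ℝ≥0∞) (hg : Measurable g) :
    ∫⁻ y, ENNReal.ofReal (exp (tiltF m v r (x, y))) * g y ∂(gaussianReal m v)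
      = ENNReal.ofReal √(1 - r ^ 2) *
        ∫⁻ y, g y ∂(gaussianReal (m + r * (x - m)) (condVarG v r)) := by
  have hmeas : Measurable (fun y => ENNReal.ofReal (exp (tiltF m v r (x, y)))) := by
    have := measurable_tiltF m v r
    fun_prop
  rw [← smul_eq_mul (a := ENNReal.ofReal √(1 - r ^ 2)), ← lintegral_smul_measure,
    ← withDensity_tiltF m v hv h0 h1, lintegral_withDensity_eq_lintegral_mul _ hmeas hg]
  rfl

lemma lintegral_exp_tiltF (m : ℝ) (v : ℝ≥0) (hv : 0 < (v : ℝ)) {r : ℝ} (h0 : 0 ≤ r)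
    (h1 : r < 1) : ∫⁻ p, ENNReal.ofReal (exp (tiltF m v r p))
      ∂((gaussianReal m v).prod (gaussianReal m v)) = ENNReal.ofReal √(1 - r ^ 2) := by
  have hm := measurable_tiltF m v r
  rw [lintegral_prod _ (by fun_prop)]
  have : ∀ x, ∫⁻ y, ENNReal.ofReal (exp (tiltF m v r (x, y))) ∂(gaussianReal m v)
      = ENNReal.ofReal √(1 - r ^ 2) := by
    intro x
    simpa using lintegral_inner m v hv h0 h1 x (fun _ => 1) measurable_const
  simp [this]

lemma integrable_exp_tiltF (m : ℝ) (v : ℝ≥0) (hv : 0 < (v : ℝ)) {r : ℝ} (h0 : 0 ≤ r)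
    (h1 : r < 1) : Integrable (fun p => exp (tiltF m v r p))
      ((gaussianReal m v).prod (gaussianReal m v)) := by
  have hm := measurable_tiltF m v r
  rw [← lintegral_ofReal_ne_top_iff_integrable (by fun_prop) (ae_of_all _ fun _ => (exp_pos _).le),
    lintegral_exp_tiltF m v hv h0 h1]
  simp

lemma integral_exp_tiltF (m : ℝ) (v : ℝ≥0) (hv : 0 < (v : ℝ)) {r : ℝ} (h0 : 0 ≤ r)
    (h1 : r < 1) : ∫ p, exp (tiltF m v r p)
      ∂((gaussianReal m v).prod (gaussianReal m v)) = √(1 - r ^ 2) := by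
  have hm := measurable_tiltF m v r
  rw [integral_eq_lintegral_of_nonneg_ae (ae_of_all _ fun _ => (exp_pos _).le) (by fun_prop),
    lintegral_exp_tiltF m v hv h0 h1, ENNReal.toReal_ofReal (by positivity)]

/-- The optimal coupling. -/
noncomputable def optG (m : ℝ) (v : ℝ≥0) (r : ℝ) : Measure (ℝ × ℝ) :=
  ((gaussianReal m v).prod (gaussianReal m v)).tilted (tiltF m v r)

lemma lintegral_optG (m : ℝ) (v : ℝ≥0) (hv : 0 < (v : ℝ)) {r : ℝ} (h0 : 0 ≤ r) (h1 : r < 1)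
    (g : ℝ × ℝ → ℝ≥0∞) (hg : Measurable g) :
    ∫⁻ p, g p ∂(optG m v r) = ∫⁻ x, ∫⁻ y, g (x, y)
      ∂(gaussianReal (m + r * (x - m)) (condVarG v r)) ∂(gaussianReal m v) := by
  have hm := measurable_tiltF m v r
  have hr : 0 < 1 - r ^ 2 := by nlinarith
  have hs : 0 < √(1 - r ^ 2) := Real.sqrt_pos.2 hr
  rw [optG, Measure.tilted, integral_exp_tiltF m v hv h0 h1,
    lintegral_withDensity_eq_lintegral_mul _ (by fun_prop) hg, lintegral_prod _ (by
      apply Measurable.aemeasurable; fun_prop)]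
  congr 1
  ext x
  have : ∀ y, ((fun p => ENNReal.ofReal (exp (tiltF m v r p) / √(1 - r ^ 2))) * g) (x, y)
      = ENNReal.ofReal (√(1 - r ^ 2))⁻¹ *
        (ENNReal.ofReal (exp (tiltF m v r (x, y))) * g (x, y)) := by
    intro y
    simp only [Pi.mul_apply]
    rw [← mul_assoc, ← ENNReal.ofReal_mul (by positivity)]
    congr 2; rw [div_eq_inv_mul]
  simp_rw [this]
  rw [lintegral_const_mul _ (by fun_prop), lintegral_inner m v hv h0 h1 x (fun y => g (x, y))
    (by fun_prop), ← mul_assoc, ← ENNReal.ofReal_mul (by positivity), inv_mul_cancel₀ hs.ne']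
  simp

lemma isProb_optG (m : ℝ) (v : ℝ≥0) (hv : 0 < (v : ℝ)) {r : ℝ} (h0 : 0 ≤ r) (h1 : r < 1) :
    IsProbabilityMeasure (optG m v r) :=
  isProbabilityMeasure_tilted (integrable_exp_tiltF m v hv h0 h1)

lemma optG_fst (m : ℝ) (v : ℝ≥0) (hv : 0 < (v : ℝ)) {r : ℝ} (h0 : 0 ≤ r) (h1 : r < 1) :
    (optG m v r).map Prod.fst = gaussianReal m v := by
  refine Measure.ext_of_lintegral _ fun g hg => ?_
  rw [lintegral_map hg measurable_fst, lintegral_optG m v hv h0 h1 _ (by fun_prop)]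
  simp

lemma optG_swap (m : ℝ) (v : ℝ≥0) (r : ℝ) :
    (optG m v r).map Prod.swap = optG m v r := by
  have hm := measurable_tiltF m v r
  refine Measure.ext_of_lintegral _ fun g hg => ?_
  rw [lintegral_map hg measurable_swap, optG, Measure.tilted,
    lintegral_withDensity_eq_lintegral_mul _ (by fun_prop) (by fun_prop),
    lintegral_withDensity_eq_lintegral_mul _ (by fun_prop) (by fun_prop)]
  rw [← lintegral_prod_swap]
  refine lintegral_congr fun p => ?_
  simp only [Pi.mul_apply, Prod.swap_swap]
  congr 4
  exact tiltF_swap _ _ _ _ _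

lemma optG_snd (m : ℝ) (v : ℝ≥0) (hv : 0 < (v : ℝ)) {r : ℝ} (h0 : 0 ≤ r) (h1 : r < 1) :
    (optG m v r).map Prod.snd = gaussianReal m v := by
  rw [← optG_fst m v hv h0 h1]
  conv_rhs => rw [← optG_swap]
  rw [Measure.map_map measurable_fst measurable_swap]
  rfl

lemma optG_dist (m : ℝ) (v : ℝ≥0) (hv : 0 < (v : ℝ)) {r : ℝ} (h0 : 0 ≤ r) (h1 : r < 1) :
    ∫⁻ p, ENNReal.ofReal ((p.1 - p.2) ^ 2) ∂(optG m v r) = ENNReal.ofReal (2 * v * (1 - r)) := by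
  have hr : 0 < 1 - r ^ 2 := by nlinarith
  rw [lintegral_optG m v hv h0 h1 _ (by fun_prop)]
  have : ∀ x : ℝ, ∫⁻ y, ENNReal.ofReal ((x - y) ^ 2)
      ∂(gaussianReal (m + r * (x - m)) (condVarG v r))
      = ENNReal.ofReal (v * (1 - r ^ 2)) +
        ENNReal.ofReal ((1 - r) ^ 2) * ENNReal.ofReal ((x - m) ^ 2) := by
    intro x
    have e : ∀ y : ℝ, (x - y) ^ 2 = (y - x) ^ 2 := fun y => by ring
    simp_rw [e]
    rw [lintegral_sq_gauss, coe_condVarG v h0 h1, ← ENNReal.ofReal_mul (by positivity),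
      ← ENNReal.ofReal_add (by positivity) (by positivity)]
    congr 1; ring
  simp only [this]
  rw [lintegral_add_left measurable_const, lintegral_const_mul _ (by fun_prop),
    lintegral_sq_gauss, lintegral_const, measure_univ, mul_one, ← ENNReal.ofReal_mul (by positivity),
      ← ENNReal.ofReal_add (by positivity) (by positivity)]
  congr 1; ring

/-- Integral of `tiltF` under any coupling. -/
lemma coupling_tiltF (m : ℝ) (v : ℝ≥0) (hv : 0 < (v : ℝ)) {r : ℝ} (h0 : 0 ≤ r) (h1 : r < 1)
    (ρ : Measure (ℝ × ℝ)) (hf : ρ.map Prod.fst = gaussianReal m v)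
    (hs : ρ.map Prod.snd = gaussianReal m v) (D : ℝ≥0∞) (hD' : D ≠ ∞)
    (hD : ∫⁻ p, ENNReal.ofReal ((p.1 - p.2) ^ 2) ∂ρ = D) :
    Integrable (tiltF m v r) ρ ∧ ∫ p, tiltF m v r p ∂ρ
      = r / (2 * v * (1 - r ^ 2)) * ((1 - r) * (2 * v) - D.toReal) := by
  have i1 : Integrable (fun p : ℝ × ℝ => (p.1 - m) ^ 2) ρ := by
    have := integrable_sq_gauss m m v
    rw [← hf] at this
    exact this.comp_measurable measurable_fst
  have i2 : Integrable (fun p : ℝ × ℝ => (p.2 - m) ^ 2) ρ := by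
    have := integrable_sq_gauss m m v
    rw [← hs] at this
    exact this.comp_measurable measurable_snd
  have i3 : Integrable (fun p : ℝ × ℝ => (p.1 - p.2) ^ 2) ρ := by
    rw [← lintegral_ofReal_ne_top_iff_integrable (by fun_prop) (ae_of_all _ fun _ => sq_nonneg _),
      hD]
    exact hD'
  have v1 : ∫ p, (p.1 - m) ^ 2 ∂ρ = v := by
    have := integral_sq_gauss m m v
    rw [← hf, integral_map measurable_fst.aemeasurable (by fun_prop)] at this
    simpa using this
  have v2 : ∫ p, (p.2 - m) ^ 2 ∂ρ = v := by
    have := integral_sq_gauss m m v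
    rw [← hs, integral_map measurable_snd.aemeasurable (by fun_prop)] at this
    simpa using this
  have v3 : ∫ p, (p.1 - p.2) ^ 2 ∂ρ = D.toReal := by
    rw [integral_eq_lintegral_of_nonneg_ae (ae_of_all _ fun _ => sq_nonneg _) (by fun_prop), hD]
  have i4 : Integrable (fun p : ℝ × ℝ => (1 - r) * ((p.1 - m) ^ 2 + (p.2 - m) ^ 2)) ρ :=
    (i1.add i2).const_mul _
  constructor
  · exact (((i1.add i2).const_mul _).sub i3).const_mul _
  · simp only [tiltF]
    rw [integral_const_mul, integral_sub i4 i3, integral_const_mul,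
      integral_add i1 i2, v1, v2, v3]
    ring

lemma RDP_le (m : ℝ) (v : ℝ≥0) (hv : 0 < (v : ℝ)) {r : ℝ} (h0 : 0 ≤ r) (h1 : r < 1)
    (D : ℝ) (hD : 2 * v * (1 - r) ≤ D) :
    RDP (gaussianReal m v) (fun p => (p.1 - p.2) ^ 2) (ENNReal.ofReal D)
      ≤ ENNReal.ofReal (-log √(1 - r ^ 2)) := by
  have := isProb_optG m v hv h0 h1
  refine (iInf₂_le (optG m v r) ⟨this, optG_fst m v hv h0 h1, optG_snd m v hv h0 h1, ?_⟩).trans ?_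
  swap
  · rw [optG_dist m v hv h0 h1]; exact ENNReal.ofReal_le_ofReal hD
  rw [mutualInfo, optG_fst m v hv h0 h1, optG_snd m v hv h0 h1, klDiv]
  obtain ⟨hi, hI⟩ := coupling_tiltF m v hv h0 h1 (optG m v r) (optG_fst m v hv h0 h1)
    (optG_snd m v hv h0 h1) _ ENNReal.ofReal_ne_top (optG_dist m v hv h0 h1)
  rw [ENNReal.toReal_ofReal (by have : 0 ≤ 1 - r := by linarith
                                positivity)] at hI
  have hac : optG m v r ≪ (gaussianReal m v).prod (gaussianReal m v) :=
    tilted_absolutelyContinuous _ _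
  have hl : llr (optG m v r) ((gaussianReal m v).prod (gaussianReal m v)) =ᵐ[optG m v r]
      fun p => tiltF m v r p - log √(1 - r ^ 2) := by
    have h2 := llr_tilted_left (Measure.AbsolutelyContinuous.refl
      ((gaussianReal m v).prod (gaussianReal m v))) (integrable_exp_tiltF m v hv h0 h1)
      (measurable_tiltF m v r).aemeasurable
    rw [integral_exp_tiltF m v hv h0 h1] at h2
    filter_upwards [hac h2, hac (llr_self ((gaussianReal m v).prod (gaussianReal m v)))]
      with p hp hp'
    rw [optG, hp, hp']; simp
  rw [if_pos ⟨hac, (integrable_congr hl).2 (hi.sub (integrable_const _))⟩]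
  apply ENNReal.ofReal_le_ofReal
  rw [integral_congr_ae hl, integral_sub hi (integrable_const _), hI]
  simp only [integral_const, probReal_univ, one_smul]
  apply le_of_eq
  ring

lemma le_RDP (m : ℝ) (v : ℝ≥0) (hv : 0 < (v : ℝ)) {r : ℝ} (h0 : 0 ≤ r) (h1 : r < 1) :
    ENNReal.ofReal (-log √(1 - r ^ 2)) ≤
    RDP (gaussianReal m v) (fun p => (p.1 - p.2) ^ 2) (ENNReal.ofReal (2 * v * (1 - r))) := by
  have hr : 0 < 1 - r ^ 2 := by nlinarith
  refine le_iInf₂ fun ρ hρ => ?_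
  obtain ⟨hp, hf, hs, hD⟩ := hρ
  rw [mutualInfo, hf, hs, klDiv]
  split_ifs with h
  swap
  · exact le_top
  obtain ⟨hac, hint⟩ := h
  obtain ⟨hi, hI⟩ := coupling_tiltF m v hv h0 h1 ρ hf hs _
    (ne_top_of_le_ne_top ENNReal.ofReal_ne_top hD) rfl
  have hD2 := ENNReal.toReal_mono ENNReal.ofReal_ne_top hD
  rw [ENNReal.toReal_ofReal (by have : 0 ≤ 1 - r := by linarith
                                positivity)] at hD2
  have hpos : 0 ≤ ∫ p, tiltF m v r p ∂ρ := by
    rw [hI]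
    apply mul_nonneg (by positivity)
    linarith
  apply ENNReal.ofReal_le_ofReal
  have he := integrable_exp_tiltF m v hv h0 h1
  have := isProb_optG m v hv h0 h1
  have hG := InformationTheory.integral_llr_add_sub_measure_univ_nonneg
    (hac.trans (absolutelyContinuous_tilted he)) (integrable_llr_tilted_right hac hi hint he)
  rw [integral_llr_tilted_right hac hi he hint, integral_exp_tiltF m v hv h0 h1] at hG
  have e1 : (((gaussianReal m v).prod (gaussianReal m v)).tilted (tiltF m v r)).real Set.univ = 1 :=
    probReal_univ (μ := optG m v r)
  rw [e1, probReal_univ] at hG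
  linarith

/-- the DP-RDF for a Gaussian distribution `N(μ_X, σ_X²)` and squared error is
`log(σ_X² / (σ_X² D − D²/4)^{1/2})` for `0 < D < 2σ_X²`, and `0` for `D ≥ 2σ_X²`. -/
theorem RDP_gaussian (μX : ℝ) (v : ℝ≥0) (hv : 0 < (v : ℝ)) :
    (∀ D : ℝ, 0 < D → D < 2 * (v : ℝ) →
      RDP (gaussianReal μX v) (fun p => (p.1 - p.2) ^ 2) (ENNReal.ofReal D) =
        ENNReal.ofReal (Real.log ((v : ℝ) / Real.sqrt ((v : ℝ) * D - D ^ 2 / 4)))) ∧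
    (∀ D : ℝ, 2 * (v : ℝ) ≤ D →
      RDP (gaussianReal μX v) (fun p => (p.1 - p.2) ^ 2) (ENNReal.ofReal D) = 0) := by
  constructor
  · intro D hD0 hD1
    have h0 : 0 ≤ 1 - D / (2 * v) := by
      rw [sub_nonneg, div_le_one (by positivity)]; exact hD1.le
    have h1 : 1 - D / (2 * v) < 1 := by
      have : 0 < D / (2 * v) := by positivity
      linarith
    have hD : 2 * v * (1 - (1 - D / (2 * v))) = D := by field_simp; ring
    have hp : 0 < v * D - D ^ 2 / 4 := by nlinarith
    have e : -log √(1 - (1 - D / (2 * v)) ^ 2) = log (v / √(v * D - D ^ 2 / 4)) := by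
      rw [← Real.log_inv]
      congr 1
      have : 1 - (1 - D / (2 * v)) ^ 2 = (v * D - D ^ 2 / 4) / (v : ℝ) ^ 2 := by
        field_simp; ring
      rw [this, Real.sqrt_div hp.le, Real.sqrt_sq hv.le, inv_div]
    have hle := le_RDP μX v hv h0 h1
    rw [hD] at hle
    rw [← e]
    exact le_antisymm (RDP_le μX v hv h0 h1 D hD.le) hle
  · intro D hD
    have := RDP_le μX v hv le_rfl zero_lt_one D (by simpa using hD)
    simpa using this
end

section
/- Let X be a Gaussian random variable with mean μ_X and variance σ_X², and let N be a Gaussian random variable with mean 0 and variance σ_N², independent of X. Define X̃ = (σ_X²/(σ_X² + σ_N²))^{1/2} (X − μ_X + N) + μ_X. Then X̃ has the same distribution N(μ_X, σ_X²) as X, and the mean squared error is E[(X − X̃)²] = 2σ_X² (1 − (σ_X²/(σ_X² + σ_N²))^{1/2}). -/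
open MeasureTheory ProbabilityTheory Real
open scoped ENNReal NNReal

lemma gaussian_lin_comb {Ω : Type*} [MeasurableSpace Ω] (P : Measure Ω)
    (X N : Ω → ℝ) (hXm : Measurable X) (hNm : Measurable N)
    (μX : ℝ) (vX vN : ℝ≥0)
    (hX : P.map X = gaussianReal μX vX) (hN : P.map N = gaussianReal 0 vN)
    (hindep : IndepFun X N P) (a b : ℝ) (v : ℝ≥0) (hv : (v : ℝ) = a ^ 2 * vX + b ^ 2 * vN) :
    HasLaw (fun ω => a * (X ω - μX) + b * N ω) (gaussianReal 0 v) P := by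
  have h1 : HasLaw X (gaussianReal μX vX) P := ⟨hXm.aemeasurable, hX⟩
  have h2 : HasLaw N (gaussianReal 0 vN) P := ⟨hNm.aemeasurable, hN⟩
  have h3 := gaussianReal_const_mul (gaussianReal_sub_const h1 μX) a
  have h4 := gaussianReal_const_mul h2 b
  have hi : IndepFun (fun ω => a * (X ω - μX)) (fun ω => b * N ω) P :=
    hindep.comp (φ := fun x => a * (x - μX)) (ψ := fun x => b * x) (by fun_prop) (by fun_prop)
  have h5 := gaussianReal_add_gaussianReal_of_indepFun hi h3.map_eq h4.map_eq
  refine ⟨by fun_prop, ?_⟩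
  refine Eq.trans h5 ?_
  congr 1
  · simp
  · ext
    simp [hv]

/-- for independent `X ~ N(μ_X, σ_X²)` and `N ~ N(0, σ_N²)`, the random variable
`X̃ = (σ_X²/(σ_X² + σ_N²))^{1/2} (X − μ_X + N) + μ_X` has the same distribution `N(μ_X, σ_X²)`
as `X`, and `E[(X − X̃)²] = 2σ_X² (1 − (σ_X²/(σ_X² + σ_N²))^{1/2})`. -/
theorem gaussian_forward_channel {Ω : Type*} [MeasurableSpace Ω] (P : Measure Ω)
    [IsProbabilityMeasure P] (X N : Ω → ℝ) (hXm : Measurable X) (hNm : Measurable N)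
    (μX : ℝ) (vX vN : ℝ≥0) (hvX : 0 < (vX : ℝ)) (hvN : 0 < (vN : ℝ))
    (hX : P.map X = gaussianReal μX vX) (hN : P.map N = gaussianReal 0 vN)
    (hindep : IndepFun X N P) :
    P.map (fun ω => Real.sqrt ((vX : ℝ) / ((vX : ℝ) + (vN : ℝ))) * (X ω - μX + N ω) + μX) =
        gaussianReal μX vX ∧
      ∫ ω, (X ω -
          (Real.sqrt ((vX : ℝ) / ((vX : ℝ) + (vN : ℝ))) * (X ω - μX + N ω) + μX)) ^ 2 ∂P =
        2 * (vX : ℝ) * (1 - Real.sqrt ((vX : ℝ) / ((vX : ℝ) + (vN : ℝ)))) := by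
  set c := Real.sqrt ((vX : ℝ) / ((vX : ℝ) + (vN : ℝ))) with hc
  have hc2 : c ^ 2 * (vX + vN) = (vX : ℝ) := by
    rw [hc, Real.sq_sqrt (by positivity)]
    field_simp
  constructor
  · have h := gaussian_lin_comb P X N hXm hNm μX vX vN hX hN hindep c c vX (by linarith)
    have h' := (gaussianReal_add_const h μX).map_eq
    rw [zero_add] at h'
    rw [← h']
    congr 1
    ext ω
    ring
  · obtain ⟨v, hv⟩ : ∃ v : ℝ≥0, (v : ℝ) = (1 - c) ^ 2 * vX + (-c) ^ 2 * vN :=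
      ⟨⟨(1 - c) ^ 2 * vX + (-c) ^ 2 * vN, by positivity⟩, rfl⟩
    have h := gaussian_lin_comb P X N hXm hNm μX vX vN hX hN hindep (1 - c) (-c) v hv
    have e : ∀ ω, X ω - (c * (X ω - μX + N ω) + μX) = (1 - c) * (X ω - μX) + -c * N ω :=
      fun ω => by ring
    simp_rw [e]
    have hi := integral_map (μ := P) h.aemeasurable
      (f := fun x : ℝ => x ^ 2) (by fun_prop)
    rw [← hi, h.map_eq]
    have hV := variance_fun_id_gaussianReal (μ := 0) (v := v)
    rw [variance_eq_integral (by fun_prop)] at hV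
    simp only [integral_id_gaussianReal, sub_zero] at hV
    rw [hV, hv]
    linarith
end

section
/- Mean-value property of the dithered quantizer (Lemma): let X be a random vector in ℝ^k with density f_X, let P₀ ⊂ ℝ^k be a compact connected set of positive volume, let N be uniformly distributed over −P₀ and independent of X, and set X̂ = X + N. Assume the conditional c.d.f. F_{X_I|X_J} is continuous. Then for any realization x̂ of X̂ and any two disjoint subsets I, J of {1,…,k}, there exists x̃ ∈ x̂ + P₀ such that F_{X_I|X_J}(x̃_I | x̃_J) = F_{X̂_I|X̂_J}(x̂_I | x̂_J). -/
open MeasureTheory ProbabilityTheory Real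
open scoped ENNReal NNReal Classical

/-- Combine values on coordinates in `J` (taken from `x`) with values outside `J`
(taken from `y`) into a full vector in `ℝ^k`. -/
def glue {k : ℕ} (J : Finset (Fin k)) (x : Fin k → ℝ) (y : {i : Fin k // i ∉ J} → ℝ) :
    Fin k → ℝ :=
  fun i => if h : i ∈ J then x i else y ⟨i, h⟩

/-- Marginal density of the subvector indexed by `J`, obtained from a joint density `f` on
`ℝ^k` by integrating out the coordinates outside `J`.  It is written as a function of a full
vector in `ℝ^k`, but depends only on the coordinates in `J`. -/
noncomputable def margDen {k : ℕ} (f : (Fin k → ℝ) → ℝ) (J : Finset (Fin k))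
    (x : Fin k → ℝ) : ℝ :=
  ∫ y : {i : Fin k // i ∉ J} → ℝ, f (glue J x y)

/-- Numerator of the conditional c.d.f. of the subvector indexed by `I` given the subvector
indexed by `J`, for a joint density `f` on `ℝ^k`: the coordinates in `I` are integrated up to
the corresponding values of `x`, the coordinates in `J` are fixed at the values of `x`, and all
remaining coordinates are integrated out. -/
noncomputable def condCDFNum {k : ℕ} (f : (Fin k → ℝ) → ℝ) (I J : Finset (Fin k))
    (x : Fin k → ℝ) : ℝ :=
  ∫ y : {i : Fin k // i ∉ J} → ℝ,
    if ∀ i : {i : Fin k // i ∉ J}, i.1 ∈ I → y i ≤ x i.1 then f (glue J x y) else 0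

/-- Conditional c.d.f. `F_{X_I | X_J}` derived from a joint density `f` on `ℝ^k`, written as a
function of a full vector (argument coordinates in `I` are the evaluation point of the c.d.f.,
coordinates in `J` are the conditioning values). -/
noncomputable def condCDFd {k : ℕ} (f : (Fin k → ℝ) → ℝ) (I J : Finset (Fin k))
    (x : Fin k → ℝ) : ℝ :=
  condCDFNum f I J x / margDen f J x

lemma measurable_glue {k : ℕ} (J : Finset (Fin k)) :
    Measurable (fun p : (Fin k → ℝ) × ({i : Fin k // i ∉ J} → ℝ) => glue J p.1 p.2) := by
  refine measurable_pi_lambda _ fun i => ?_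
  by_cases h : i ∈ J
  · simp only [glue, h, dif_pos]; fun_prop
  · simp only [glue, h, dif_neg, not_false_eq_true]; fun_prop

lemma glue_add {k : ℕ} (J : Finset (Fin k)) (x τ : Fin k → ℝ) (y : {i : Fin k // i ∉ J} → ℝ) :
    glue J x y + τ = glue J (x + τ) (y + fun i => τ i.1) := by
  funext i
  by_cases h : i ∈ J <;> simp [glue, h]

lemma lint_glue {k : ℕ} (J : Finset (Fin k)) (F : (Fin k → ℝ) → ℝ≥0∞) (hF : Measurable F) :
    ∫⁻ x, F x = ∫⁻ a : {i : Fin k // i ∈ J} → ℝ, ∫⁻ y : {i : Fin k // i ∉ J} → ℝ,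
      F ((MeasurableEquiv.piEquivPiSubtypeProd (fun _ : Fin k => ℝ) (fun i => i ∈ J)).symm
        (a, y)) := by
  have h := (volume_preserving_piEquivPiSubtypeProd (fun _ : Fin k => ℝ) (fun i => i ∈ J)).symm
  rw [← h.lintegral_comp hF, Measure.volume_eq_prod, lintegral_prod]
  · congr!
  exact (hF.comp (MeasurableEquiv.piEquivPiSubtypeProd (fun _ : Fin k => ℝ)
    (fun i => i ∈ J)).symm.measurable).aemeasurable

lemma lint_finite {k : ℕ} (J : Finset (Fin k)) (F : (Fin k → ℝ) → ℝ≥0∞) (hF : Measurable F)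
    (hfin : ∫⁻ x, F x ≠ ∞) (A : Set (Fin k → ℝ)) (hA : IsCompact A) (xh : Fin k → ℝ) :
    ∫⁻ τ in A, ∫⁻ y : {i : Fin k // i ∉ J} → ℝ, F (glue J (xh + τ) y) ≠ ∞ := by
  obtain ⟨R, hR⟩ := hA.isBounded.subset_closedBall 0
  set e := MeasurableEquiv.piEquivPiSubtypeProd (fun _ : Fin k => ℝ) (fun i => i ∈ J) with he
  set B : Set ({i : Fin k // i ∉ J} → ℝ) := Metric.closedBall 0 R with hB
  set M : (Fin k → ℝ) → ℝ≥0∞ :=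
    fun τ => ∫⁻ y : {i : Fin k // i ∉ J} → ℝ, F (glue J (xh + τ) y) with hM
  have hMm : Measurable M := by
    apply Measurable.lintegral_prod_right'
      (f := fun p : (Fin k → ℝ) × ({i : Fin k // i ∉ J} → ℝ) => F (glue J (xh + p.1) p.2))
    apply hF.comp
    exact (measurable_glue J).comp ((measurable_const.add measurable_fst).prodMk measurable_snd)
  set r : (Fin k → ℝ) → ({i : Fin k // i ∉ J} → ℝ) := fun τ i => τ i.1 with hr
  have hrm : Measurable r := by fun_prop
  have hsub : A ⊆ r ⁻¹' B := by
    intro τ hτ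
    have h1 := hR hτ
    rw [mem_closedBall_zero_iff] at h1
    have hR0 : 0 ≤ R := (norm_nonneg _).trans h1
    rw [Set.mem_preimage, hB, mem_closedBall_zero_iff, pi_norm_le_iff_of_nonneg hR0]
    intro i
    exact (norm_le_pi_norm τ i.1).trans h1
  have hBm : MeasurableSet B := measurableSet_closedBall
  have key : ∫⁻ τ in r ⁻¹' B, M τ = volume B * ∫⁻ x, F x := by
    rw [← lintegral_indicator (hrm hBm), lint_glue J _ (hMm.indicator (hrm hBm))]
    have h2 : ∀ (a : {i : Fin k // i ∈ J} → ℝ) (b : {i : Fin k // i ∉ J} → ℝ),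
        (r ⁻¹' B).indicator M (e.symm (a, b)) =
        B.indicator (fun _ => ∫⁻ y : {i : Fin k // i ∉ J} → ℝ,
          F (e.symm ((fun i => xh i.1) + a, y))) b := by
      intro a b
      have h3 : r (e.symm (a, b)) = b := by
        funext i
        have := i.2
        simp [hr, he, MeasurableEquiv.piEquivPiSubtypeProd, Equiv.piEquivPiSubtypeProd, this]
      have h4 : M (e.symm (a, b)) = ∫⁻ y : {i : Fin k // i ∉ J} → ℝ,
          F (e.symm ((fun i => xh i.1) + a, y)) := by
        simp only [hM]
        congr 1
        funext y
        congr 1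
        funext i
        by_cases h : i ∈ J <;>
        simp [glue, he, MeasurableEquiv.piEquivPiSubtypeProd, Equiv.piEquivPiSubtypeProd, h]
      by_cases hb : b ∈ B
      · rw [Set.indicator_of_mem (by simpa [h3] using hb), Set.indicator_of_mem hb, h4]
      · rw [Set.indicator_of_notMem (by simpa [h3] using hb), Set.indicator_of_notMem hb]
    change ∫⁻ a, ∫⁻ b, (r ⁻¹' B).indicator M (e.symm (a, b)) = _
    simp_rw [h2, lintegral_indicator hBm, lintegral_const, Measure.restrict_apply_univ]
    rw [lintegral_mul_const' _ _ (measure_closedBall_lt_top).ne, mul_comm]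
    congr 1
    rw [lint_glue J F hF]
    exact lintegral_add_left_eq_self (fun a => ∫⁻ y : {i : Fin k // i ∉ J} → ℝ,
          F (e.symm (a, y))) (fun i => xh i.1)
  refine ne_top_of_le_ne_top ?_ (lintegral_mono_set hsub)
  rw [key]
  exact ENNReal.mul_ne_top (measure_closedBall_lt_top).ne hfin

/-- the joint function is integrable -/
lemma joint_integrable {k : ℕ} (J : Finset (Fin k)) (f : (Fin k → ℝ) → ℝ) (hfm : Measurable f)
    (hf0 : ∀ x, 0 ≤ f x) (hfin : ∫⁻ x, ENNReal.ofReal (f x) ≠ ∞)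
    (A : Set (Fin k → ℝ)) (hA : IsCompact A) (xh : Fin k → ℝ) :
    Integrable (fun p : (Fin k → ℝ) × ({i : Fin k // i ∉ J} → ℝ) => f (glue J xh p.2 + p.1))
      ((volume.restrict A).prod volume) := by
  have hm : Measurable (fun p : (Fin k → ℝ) × ({i : Fin k // i ∉ J} → ℝ) =>
      f (glue J xh p.2 + p.1)) :=
    hfm.comp (((measurable_glue J).comp (measurable_const.prodMk measurable_snd)).add measurable_fst)
  refine ⟨hm.aestronglyMeasurable, ?_⟩
  rw [hasFiniteIntegral_iff_ofReal (Filter.Eventually.of_forall fun _ => hf0 _)]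
  rw [lintegral_prod _ hm.ennreal_ofReal.aemeasurable]
  have := lint_finite J (fun x => ENNReal.ofReal (f x)) hfm.ennreal_ofReal hfin A hA xh
  refine lt_of_eq_of_lt ?_ this.lt_top
  congr 1
  funext τ
  simp_rw [glue_add]
  exact lintegral_add_right_eq_self (fun y : {i : Fin k // i ∉ J} → ℝ =>
    ENNReal.ofReal (f (glue J (xh + τ) y))) _

lemma shift_num {k : ℕ} (I J : Finset (Fin k)) (f : (Fin k → ℝ) → ℝ) (xh τ : Fin k → ℝ) :
    condCDFNum f I J (xh + τ) = ∫ y : {i : Fin k // i ∉ J} → ℝ,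
      if ∀ i : {i : Fin k // i ∉ J}, i.1 ∈ I → y i ≤ xh i.1 then f (glue J xh y + τ) else 0 := by
  unfold condCDFNum
  rw [← integral_add_right_eq_self _ (fun i : {i : Fin k // i ∉ J} => τ i.1)]
  congr 1
  funext y
  rw [glue_add]
  simp [Pi.add_apply]

lemma shift_marg {k : ℕ} (J : Finset (Fin k)) (f : (Fin k → ℝ) → ℝ) (xh τ : Fin k → ℝ) :
    margDen f J (xh + τ) = ∫ y : {i : Fin k // i ∉ J} → ℝ, f (glue J xh y + τ) := by
  unfold margDen
  rw [← integral_add_right_eq_self _ (fun i : {i : Fin k // i ∉ J} => τ i.1)]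
  congr 1
  funext y
  rw [glue_add]

/-- mean-value property of the dithered quantizer.  Let `X` have density `f` on
`ℝ^k`, let `P₀` be a compact connected set of positive volume, let `N` be uniform over `−P₀`
and independent of `X`, and `X̂ = X + N`.  If the conditional c.d.f. `F_{X_I|X_J}` is
continuous, then for any realization `x̂` of `X̂` and any two disjoint subsets `I`, `J` of the
coordinates there exists `x̃ ∈ x̂ + P₀` with
`F_{X_I|X_J}(x̃_I | x̃_J) = F_{X̂_I|X̂_J}(x̂_I | x̂_J)`. -/
theorem dithered_quantizer_mean_value {Ω : Type*} [MeasurableSpace Ω]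
    (P : Measure Ω) [IsProbabilityMeasure P] {k : ℕ} (X N : Ω → (Fin k → ℝ))
    (hXm : Measurable X) (hNm : Measurable N)
    (f : (Fin k → ℝ) → ℝ) (hfm : Measurable f) (hf0 : ∀ x, 0 ≤ f x)
    (hX : P.map X = volume.withDensity (fun x => ENNReal.ofReal (f x)))
    (P₀ : Set (Fin k → ℝ)) (hP₀c : IsCompact P₀) (hP₀conn : IsConnected P₀)
    (hV : 0 < volume P₀)
    (hN : P.map N = (volume P₀)⁻¹ • volume.restrict (-P₀))
    (hindep : IndepFun X N P)
    (I J : Finset (Fin k)) (hIJ : Disjoint I J)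
    (hcont : Continuous (condCDFd f I J)) :
    ∀ xh : Fin k → ℝ, ∃ xt : Fin k → ℝ, xt - xh ∈ P₀ ∧
      condCDFd f I J xt =
        condCDFd (fun x => (volume P₀).toReal⁻¹ * ∫ τ in P₀, f (x + τ)) I J xh := by
  intro xh
  have hfin : ∫⁻ x, ENNReal.ofReal (f x) ≠ ∞ := by
    have h1 : (P.map X) Set.univ = 1 := by
      rw [Measure.map_apply hXm MeasurableSet.univ]; simp
    rw [hX, withDensity_apply _ MeasurableSet.univ, Measure.restrict_univ] at h1
    rw [h1]; exact ENNReal.one_ne_top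
  have hΦ := joint_integrable J f hfm hf0 hfin P₀ hP₀c xh
  set S : Set ({i : Fin k // i ∉ J} → ℝ) :=
    {y | ∀ i : {i : Fin k // i ∉ J}, i.1 ∈ I → y i ≤ xh i.1} with hS
  have hSm : MeasurableSet S := by
    have : S = ⋂ i : {i : Fin k // i ∉ J}, ⋂ _ : i.1 ∈ I, {y | y i ≤ xh i.1} := by
      ext y; simp [hS]
    rw [this]
    refine MeasurableSet.iInter fun i => MeasurableSet.iInter fun _ => ?_
    exact measurableSet_le (measurable_pi_apply i) measurable_const
  have hΨ : Integrable (fun p : (Fin k → ℝ) × ({i : Fin k // i ∉ J} → ℝ) =>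
      if p.2 ∈ S then f (glue J xh p.2 + p.1) else 0) ((volume.restrict P₀).prod volume) := by
    have := hΦ.indicator (measurable_snd hSm)
    refine this.congr (Filter.Eventually.of_forall fun p => ?_)
    simp [Set.indicator]
  set v := (volume P₀).toReal⁻¹ with hv
  have hVpos : 0 < (volume P₀).toReal := ENNReal.toReal_pos hV.ne' hP₀c.measure_lt_top.ne
  have hvpos : 0 < v := inv_pos.2 hVpos
  set g : (Fin k → ℝ) → ℝ := fun x => v * ∫ τ in P₀, f (x + τ) with hg
  have hM : margDen g J xh = v * ∫ τ in P₀, margDen f J (xh + τ) := by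
    simp_rw [shift_marg]
    unfold margDen
    simp only [hg]
    rw [integral_const_mul]
    congr 1
    exact (integral_integral_swap
      (f := fun τ (y : {i : Fin k // i ∉ J} → ℝ) => f (glue J xh y + τ)) hΦ).symm
  have hNm' : condCDFNum g I J xh = v * ∫ τ in P₀, condCDFNum f I J (xh + τ) := by
    simp_rw [shift_num]
    have hsw := integral_integral_swap (f := fun τ (y : {i : Fin k // i ∉ J} → ℝ) =>
      if y ∈ S then f (glue J xh y + τ) else 0) hΨ
    refine Eq.trans ?_ (congrArg (fun z => v * z) hsw.symm)
    rw [← integral_const_mul]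
    unfold condCDFNum
    congr 1
    funext y
    by_cases hy : y ∈ S
    · have hy' := hy
      simp only [hS, Set.mem_setOf_eq] at hy'
      rw [if_pos hy']
      simp only [hy, if_true, hg]
    · have hy' := hy
      simp only [hS, Set.mem_setOf_eq] at hy'
      rw [if_neg hy']
      simp [hy]
  have hmi : Integrable (fun τ => margDen f J (xh + τ)) (volume.restrict P₀) := by
    simp_rw [shift_marg]
    exact hΦ.integral_prod_left
  have hni : Integrable (fun τ => condCDFNum f I J (xh + τ)) (volume.restrict P₀) := by
    simp_rw [shift_num]
    exact hΨ.integral_prod_left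
  have hm0 : ∀ x, 0 ≤ margDen f J x := fun x => integral_nonneg fun _ => hf0 _
  have hae : ∀ᵐ τ ∂(volume.restrict P₀), condCDFNum f I J (xh + τ) =
      condCDFd f I J (xh + τ) * margDen f J (xh + τ) := by
    filter_upwards [hΦ.prod_right_ae, hΨ.prod_right_ae] with τ h1 h2
    by_cases hz : margDen f J (xh + τ) = 0
    · rw [hz, mul_zero]
      apply le_antisymm
      · rw [← hz, shift_num, shift_marg]
        refine integral_mono h2 h1 fun y => ?_
        dsimp only
        split_ifs
        · exact le_rfl
        · exact hf0 _
      · rw [shift_num]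
        refine integral_nonneg fun y => ?_
        dsimp only [Pi.zero_apply]
        split_ifs
        · exact hf0 _
        · exact le_rfl
    · rw [condCDFd, div_mul_cancel₀ _ hz]
  have hconth : ContinuousOn (fun τ => condCDFd f I J (xh + τ)) P₀ :=
    (hcont.comp (continuous_const.add continuous_id)).continuousOn
  have hPm : MeasurableSet P₀ := hP₀c.measurableSet
  have hMnn : 0 ≤ ∫ τ in P₀, margDen f J (xh + τ) := integral_nonneg fun _ => hm0 _
  suffices h : ∃ τ ∈ P₀, condCDFd f I J (xh + τ) = condCDFd g I J xh by
    obtain ⟨τ, hτ, h⟩ := h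
    exact ⟨xh + τ, by simpa using hτ, h⟩
  rcases hMnn.eq_or_lt with hz | hpos
  · have h0 : condCDFd g I J xh = 0 := by
      rw [condCDFd, hM, ← hz, mul_zero, div_zero]
    have h1 : ∀ᵐ τ ∂(volume.restrict P₀), margDen f J (xh + τ) = 0 :=
      (integral_eq_zero_iff_of_nonneg (fun _ => hm0 _) hmi).1 hz.symm
    have hne : (ae (volume.restrict P₀)).NeBot := by
      rw [ae_neBot]
      intro h
      rw [Measure.restrict_eq_zero] at h
      exact hV.ne' h
    obtain ⟨τ, h2, h3⟩ := (h1.and (ae_restrict_mem hPm)).exists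
    exact ⟨τ, h3, by rw [h0, condCDFd, h2, div_zero]⟩
  · obtain ⟨a, ha, hamin⟩ := hP₀c.exists_isMinOn hP₀conn.nonempty hconth
    obtain ⟨b, hb, hbmax⟩ := hP₀c.exists_isMaxOn hP₀conn.nonempty hconth
    have hR : condCDFd g I J xh = (∫ τ in P₀, condCDFNum f I J (xh + τ)) /
        ∫ τ in P₀, margDen f J (xh + τ) := by
      rw [condCDFd, hM, hNm', mul_div_mul_left _ _ hvpos.ne']
    have := hP₀conn.isPreconnected.intermediate_value ha hb hconth
    apply this
    rw [hR]
    constructor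
    · rw [le_div_iff₀ hpos, ← integral_const_mul]
      refine integral_mono_ae (hmi.const_mul _) hni ?_
      filter_upwards [hae, ae_restrict_mem hPm] with τ h1 h2
      rw [h1]
      exact mul_le_mul_of_nonneg_right (hamin h2) (hm0 _)
    · rw [div_le_iff₀ hpos, ← integral_const_mul]
      refine integral_mono_ae hni (hmi.const_mul _) ?_
      filter_upwards [hae, ae_restrict_mem hPm] with τ h1 h2
      rw [h1]
      exact mul_le_mul_of_nonneg_right (hbmax h2) (hm0 _)
end
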